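/- arXiv:2605.03681 — 4 statements merged into one kernel-verified Lean document; each statement's English description precedes it below -/
import Mathlib

section
/- Let H be a real Hilbert space and let μ be a compactly supported finite signed Borel measure on H such that ∬ e^{−‖x−y‖²} dμ(x) dμ(y) = 0. Then μ = 0. -/
open MeasureTheory Real

/-- Integral of a function against a finite signed Borel measure,
via the Jordan decomposition. -/
noncomputable def sInt {X : Type*} [MeasurableSpace X]
    (μ : SignedMeasure X) (f : X → ℝ) : ℝ :=
  (∫ x, f x ∂μ.toJordanDecomposition.posPart) -
  (∫ x, f x ∂μ.toJordanDecomposition.negPart)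

/-- The Gaussian form ∬ e^{-‖x-y‖²} dμ(x) dν(y). -/
noncomputable def gaussForm {H : Type*} [NormedAddCommGroup H] [MeasurableSpace H]
    (μ ν : SignedMeasure H) : ℝ :=
  sInt μ (fun x => sInt ν (fun y => Real.exp (-‖x - y‖ ^ 2)))

section GaussianKernel

universe u

variable {H : Type u} [NormedAddCommGroup H] [InnerProductSpace ℝ H]

/-- Powers of the inner product have feature maps, given by tensor powers. -/
lemma exists_featureMap_inner_pow (n : ℕ) :
    ∃ (E : Type u) (_ : NormedAddCommGroup E) (_ : InnerProductSpace ℝ E) (φ : H → E),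
      ∀ x y, inner ℝ (φ x) (φ y) = inner ℝ x y ^ n := by
  induction n with
  | zero =>
    refine ⟨EuclideanSpace ℝ PUnit.{u + 1}, inferInstance, inferInstance,
      fun _ => WithLp.toLp 2 fun _ => 1, fun x y => ?_⟩
    simp only [PiLp.inner_apply]
    simp
  | succ n ih =>
    obtain ⟨E, _, _, φ, hφ⟩ := ih
    exact ⟨TensorProduct ℝ E H, inferInstance, inferInstance, fun x => φ x ⊗ₜ x,
      fun x y => by rw [TensorProduct.inner_tmul, hφ, pow_succ]⟩

lemma sum_mul_inner_pow_nonneg (s : Finset H) (c : H → ℝ) (n : ℕ) :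
    0 ≤ ∑ x ∈ s, ∑ y ∈ s, c x * c y * inner ℝ x y ^ n := by
  obtain ⟨E, _, _, φ, hφ⟩ := exists_featureMap_inner_pow (H := H) n
  have h : ∑ x ∈ s, ∑ y ∈ s, c x * c y * inner ℝ x y ^ n
      = inner ℝ (∑ x ∈ s, c x • φ x) (∑ y ∈ s, c y • φ y) := by
    simp_rw [sum_inner, inner_sum, real_inner_smul_left, real_inner_smul_right, hφ, mul_assoc]
  rw [h]
  exact real_inner_self_nonneg

lemma exp_neg_norm_sub_sq (x y : H) :
    exp (-‖x - y‖ ^ 2) = exp (-‖x‖ ^ 2) * exp (-‖y‖ ^ 2) * exp (2 * inner ℝ x y) := by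
  rw [← exp_add, ← exp_add, norm_sub_sq_real]
  ring_nf

lemma sum_mul_exp_neg_norm_sub_sq_nonneg (s : Finset H) (c : H → ℝ) :
    0 ≤ ∑ x ∈ s, ∑ y ∈ s, c x * c y * exp (-‖x - y‖ ^ 2) := by
  set d : H → ℝ := fun x => c x * exp (-‖x‖ ^ 2) with hd
  have hsum : HasSum (fun n : ℕ => ∑ x ∈ s, ∑ y ∈ s,
      d x * d y * ((2 * inner ℝ x y) ^ n / n.factorial))
      (∑ x ∈ s, ∑ y ∈ s, d x * d y * exp (2 * inner ℝ x y)) := by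
    refine hasSum_sum fun x _ => hasSum_sum fun y _ => HasSum.mul_left _ ?_
    rw [Real.exp_eq_exp_ℝ]
    exact NormedSpace.expSeries_div_hasSum_exp _
  have hpos : 0 ≤ ∑ x ∈ s, ∑ y ∈ s, d x * d y * exp (2 * inner ℝ x y) := by
    refine hsum.nonneg fun n => ?_
    have h := mul_nonneg (by positivity : (0 : ℝ) ≤ 2 ^ n / n.factorial)
      (sum_mul_inner_pow_nonneg s d n)
    simp_rw [Finset.mul_sum] at h
    refine h.trans_eq (Finset.sum_congr rfl fun x _ => Finset.sum_congr rfl fun y _ => ?_)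
    rw [mul_pow]
    ring
  refine hpos.trans_eq (Finset.sum_congr rfl fun x _ => Finset.sum_congr rfl fun y _ => ?_)
  rw [exp_neg_norm_sub_sq, hd]
  ring

/-- The Gaussian kernel has a continuous feature map into a Hilbert space. -/
lemma exists_continuous_featureMap_gaussian :
    ∃ (E : Type u) (_ : NormedAddCommGroup E) (_ : InnerProductSpace ℝ E) (_ : CompleteSpace E)
      (φ : H → E), Continuous φ ∧ ∀ x y, inner ℝ (φ x) (φ y) = exp (-‖x - y‖ ^ 2) := by
  let G : Matrix H H (ℝ →L[ℝ] ℝ) :=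
    .of fun x y => exp (-‖x - y‖ ^ 2) • ContinuousLinearMap.id ℝ ℝ
  have hG : G.PosSemidef := by
    refine ((RKHS.posSemidef_tfae (K := G)).out 0 2 rfl rfl).mpr ⟨?_, fun c => ?_⟩
    · ext x y
      simp [G, Matrix.conjTranspose_apply, norm_sub_rev, ContinuousLinearMap.star_eq_adjoint,
        ContinuousLinearMap.adjoint_id]
    · have h := sum_mul_exp_neg_norm_sub_sq_nonneg c.support c
      simp only [Finsupp.sum, G]
      refine h.trans_eq (Finset.sum_congr rfl fun x _ => Finset.sum_congr rfl fun y _ => ?_)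
      simp [norm_sub_rev]
      ring
  have : Fact G.PosSemidef := ⟨hG⟩
  let φ : H → RKHS.OfKernel G := fun x => RKHS.kerFun (RKHS.OfKernel G) x 1
  have hφ : ∀ x y, inner ℝ (φ x) (φ y) = exp (-‖x - y‖ ^ 2) := fun x y => by
    rw [← RKHS.kernel_inner, RKHS.OfKernel.kernel_ofKernel]
    simp [G, norm_sub_rev]
  refine ⟨RKHS.OfKernel G, inferInstance, inferInstance, inferInstance, φ, ?_, hφ⟩
  refine continuous_iff_continuousAt.2 fun x => tendsto_iff_norm_sub_tendsto_zero.2 ?_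
  have hnorm : ∀ y, ‖φ y - φ x‖ = √(2 - 2 * exp (-‖y - x‖ ^ 2)) := fun y => by
    rw [← Real.sqrt_sq (norm_nonneg (φ y - φ x)), norm_sub_sq_real, hφ,
      ← real_inner_self_eq_norm_sq (φ y), ← real_inner_self_eq_norm_sq (φ x), hφ, hφ]
    simp only [sub_self, norm_zero]
    ring_nf
    simp
  simp_rw [hnorm]
  have hc : Continuous fun y => √(2 - 2 * exp (-‖y - x‖ ^ 2)) := by fun_prop
  simpa using hc.tendsto x

end GaussianKernel

section ExponentialFunctions

variable {H : Type*} [NormedAddCommGroup H] [InnerProductSpace ℝ H]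

/-- The functions `x ↦ exp (2 ⟪x, y⟫)` on a compact set, multiplicative in `y`. -/
noncomputable def expInnerHom (K : Set H) [CompactSpace K] :
    Multiplicative H →* BoundedContinuousFunction K ℝ where
  toFun y := BoundedContinuousFunction.mkOfCompact
    ⟨fun x => exp (2 * inner ℝ (x : H) y.toAdd), by fun_prop⟩
  map_one' := by ext; simp
  map_mul' y z := by ext; simp [inner_add_right, mul_add, exp_add]

/-- Finite measures on a compact set are determined by the integrals of `exp (2 ⟪·, y⟫)`. -/
lemma MeasureTheory.Measure.ext_of_integral_exp_inner [MeasurableSpace H] [BorelSpace H] {K : Set H}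
    [CompactSpace K] {P Q : Measure K} [IsFiniteMeasure P] [IsFiniteMeasure Q]
    (h : ∀ y : H, ∫ x : K, exp (2 * inner ℝ (x : H) y) ∂P
      = ∫ x : K, exp (2 * inner ℝ (x : H) y) ∂Q) : P = Q := by
  let S : Submonoid (BoundedContinuousFunction K ℝ) := MonoidHom.mrange (expInnerHom K)
  let A : StarSubalgebra ℝ (BoundedContinuousFunction K ℝ) :=
    { Algebra.adjoin ℝ (S : Set (BoundedContinuousFunction K ℝ)) with
      star_mem' := fun {f} hf => by
        have : star f = f := by ext; simp
        rwa [this] }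
  refine ext_of_forall_mem_subalgebra_integral_eq_of_polish (𝕜 := ℝ) (A := A) ?_ ?_
  · intro x z hxz
    let y : H := x - z
    refine ⟨_, ⟨_, ⟨expInnerHom K (.ofAdd y), Algebra.subset_adjoin ⟨_, rfl⟩, rfl⟩, rfl⟩, ?_⟩
    change exp (2 * inner ℝ (x : H) y) ≠ exp (2 * inner ℝ (z : H) y)
    intro he
    have he' : inner ℝ ((x : H) - z) ((x : H) - z) = 0 := by
      rw [inner_sub_left]
      linarith [exp_injective he]
    exact hxz (Subtype.ext (sub_eq_zero.1 (inner_self_eq_zero.1 he')))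
  · intro g hg
    replace hg : g ∈ Subalgebra.toSubmodule
        (Algebra.adjoin ℝ (S : Set (BoundedContinuousFunction K ℝ))) := hg
    rw [Algebra.adjoin_eq_span, Submonoid.closure_eq] at hg
    induction hg using Submodule.span_induction with
    | mem f hf =>
      obtain ⟨y, rfl⟩ := hf
      exact h y.toAdd
    | zero => simp
    | add f g hf hg ihf ihg =>
      simp only [BoundedContinuousFunction.coe_add, Pi.add_apply]
      rw [integral_add (f.integrable P) (g.integrable P),
        integral_add (f.integrable Q) (g.integrable Q), ihf, ihg]
    | smul a f hf ihf =>
      simp only [BoundedContinuousFunction.coe_smul]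
      rw [integral_smul, integral_smul, ihf]

end ExponentialFunctions

/-- Both parts of the Jordan decomposition are concentrated where the signed measure is. -/
lemma posPart_and_negPart_compl_eq_zero {X : Type*} [MeasurableSpace X] {μ : SignedMeasure X}
    {K : Set X} (hK : MeasurableSet K)
    (hsupp : ∀ A : Set X, MeasurableSet A → A ⊆ Kᶜ → μ A = 0) :
    μ.toJordanDecomposition.posPart Kᶜ = 0 ∧ μ.toJordanDecomposition.negPart Kᶜ = 0 := by
  obtain ⟨i, hi, hpos, hneg, hP, hN⟩ := μ.toJordanDecomposition_spec
  rw [hP, hN, SignedMeasure.toMeasureOfZeroLE_apply _ _ _ hK.compl,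
    SignedMeasure.toMeasureOfLEZero_apply _ _ _ hK.compl]
  constructor
  · simp [hsupp _ (hi.inter hK.compl) Set.inter_subset_right]
  · simp [hsupp _ (hi.compl.inter hK.compl) Set.inter_subset_right]

/-- Finite measures on a compact set are determined by their Gaussian potentials. -/
lemma MeasureTheory.Measure.ext_of_integral_gaussian {H : Type*} [NormedAddCommGroup H] [InnerProductSpace ℝ H]
    [MeasurableSpace H] [BorelSpace H] {K : Set H} [CompactSpace K] {P Q : Measure K}
    [IsFiniteMeasure P] [IsFiniteMeasure Q]
    (h : ∀ y : H, ∫ x : K, exp (-‖(x : H) - y‖ ^ 2) ∂P = ∫ x : K, exp (-‖(x : H) - y‖ ^ 2) ∂Q) :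
    P = Q := by
  let w : K → NNReal := fun x => (exp (-‖(x : H)‖ ^ 2)).toNNReal
  have hwc : Continuous w := by fun_prop
  have hw : Measurable w := hwc.measurable
  have hw1 : ∀ x, (w x : ENNReal) ≤ 1 := fun x => by
    simp [w]
  have hw0 : ∀ x, (w x : ENNReal) ≠ 0 := fun x => by
    simp [w, exp_pos]
  have hfin : ∀ (ν : Measure K) [IsFiniteMeasure ν],
      IsFiniteMeasure (ν.withDensity fun x => w x) := fun ν _ =>
    isFiniteMeasure_withDensity
      ((lintegral_mono hw1).trans_lt (by simp)).ne
  have := hfin P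
  have := hfin Q
  have hint : ∀ (ν : Measure K) (y : H), ∫ x : K, exp (2 * inner ℝ (x : H) y)
      ∂(ν.withDensity fun x => w x)
      = exp (‖y‖ ^ 2) * (∫ x : K, exp (-‖(x : H) - y‖ ^ 2) ∂ν) := fun ν y => by
    rw [integral_withDensity_eq_integral_smul hw, ← integral_const_mul]
    refine integral_congr_ae (.of_forall fun x => ?_)
    dsimp only
    rw [exp_neg_norm_sub_sq, NNReal.smul_def, Real.coe_toNNReal _ (exp_pos _).le, smul_eq_mul,
      exp_neg (‖y‖ ^ 2)]
    field_simp
  have hd : (P.withDensity fun x => w x) = Q.withDensity fun x => w x :=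
    Measure.ext_of_integral_exp_inner fun y => by rw [hint, hint, h]
  have hinv : ∀ ν : Measure K,
      (ν.withDensity fun x => w x).withDensity (fun x => (w x : ENNReal)⁻¹) = ν := fun ν =>
    withDensity_inv_same hw.coe_nnreal_ennreal (.of_forall hw0) (.of_forall fun _ => by simp)
  rw [← hinv P, hd, hinv Q]

theorem stmt2 {H : Type*} [NormedAddCommGroup H] [InnerProductSpace ℝ H] [CompleteSpace H]
    [MeasurableSpace H] [BorelSpace H]
    (μ : SignedMeasure H) (K : Set H) (hK : IsCompact K)
    (hsupp : ∀ A : Set H, MeasurableSet A → A ⊆ Kᶜ → μ A = 0)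
    (hzero : gaussForm μ μ = 0) :
    μ = 0 := by
  obtain ⟨hP, hN⟩ := posPart_and_negPart_compl_eq_zero hK.measurableSet hsupp
  obtain ⟨E, _, _, _, φ, hφc, hφ⟩ := exists_continuous_featureMap_gaussian (H := H)
  have hrestrict : ∀ ν : Measure H, ν Kᶜ = 0 → ν.restrict K = ν := fun ν hν =>
    Measure.restrict_eq_self_of_ae_mem (mem_ae_iff.2 hν)
  have hint : ∀ (ν : Measure H) [IsFiniteMeasure ν], ν Kᶜ = 0 → Integrable φ ν := fun ν _ hν => by
    rw [← hrestrict ν hν]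
    exact hφc.continuousOn.integrableOn_compact hK
  set P := μ.toJordanDecomposition.posPart with hPdef
  set N := μ.toJordanDecomposition.negPart with hNdef
  set m : E := ∫ x, φ x ∂P - ∫ x, φ x ∂N with hm
  have hiP := hint P hP
  have hiN := hint N hN
  have hpot : ∀ x, sInt μ (fun y => exp (-‖x - y‖ ^ 2)) = inner ℝ (φ x) m := fun x => by
    simp_rw [sInt, ← hφ]
    rw [integral_inner hiP, integral_inner hiN, ← inner_sub_right]
  have hnorm : gaussForm μ μ = inner ℝ m m := by
    simp_rw [gaussForm, hpot, sInt, real_inner_comm m]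
    rw [integral_inner hiP, integral_inner hiN, ← inner_sub_right]
  have hm0 : m = 0 := inner_self_eq_zero.1 (hnorm ▸ hzero)
  have : CompactSpace K := isCompact_iff_compactSpace.1 hK
  have hcomap : P.comap ((↑) : K → H) = N.comap ((↑) : K → H) := by
    refine Measure.ext_of_integral_gaussian fun y => ?_
    rw [integral_subtype_comap hK.measurableSet (fun x => exp (-‖x - y‖ ^ 2)),
      integral_subtype_comap hK.measurableSet (fun x => exp (-‖x - y‖ ^ 2)),
      hrestrict P hP, hrestrict N hN]
    have h := hpot y
    rw [hm0, inner_zero_right, sInt, sub_eq_zero] at h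
    simpa only [norm_sub_rev y] using h
  have hPN : P = N := by
    rw [← hrestrict P hP, ← hrestrict N hN, ← map_comap_subtype_coe hK.measurableSet,
      ← map_comap_subtype_coe hK.measurableSet, hcomap]
  rw [← μ.toSignedMeasure_toJordanDecomposition, JordanDecomposition.toSignedMeasure]
  simp_rw [← hPdef, ← hNdef, hPN]
  exact sub_self _
end

section
/- Let (X,d) be a compact metric space of negative type. A Borel probability measure μ on X is diversity-maximizing if and only if there exists a constant C > 0 such that the function Zμ(x) = ∫ e^{−d(x,y)} dμ(y) equals C at every point of the support of μ and satisfies Zμ(x) ≥ C for every x ∈ X. In that case C = ⟨μ,μ⟩_W, i.e. C is the reciprocal of the maximum diversity of X. -/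
open MeasureTheory Real

/-- The similarity form ⟨μ,ν⟩_W = ∬ e^{-d(x,y)} dμ(x) dν(y) for (nonnegative) Borel
measures. -/
noncomputable def simFormP {X : Type*} [MetricSpace X] [MeasurableSpace X]
    (μ ν : Measure X) : ℝ :=
  ∫ x, ∫ y, Real.exp (-dist x y) ∂ν ∂μ

/-- The support of a Borel measure: points all of whose open neighbourhoods have
positive measure. -/
def measSupport {X : Type*} [TopologicalSpace X] [MeasurableSpace X]
    (μ : Measure X) : Set X :=
  {x | ∀ U : Set X, IsOpen U → x ∈ U → 0 < μ U}

/-- The function Zμ(x) = ∫ e^{-d(x,y)} dμ(y). -/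
noncomputable def Zfun {X : Type*} [MetricSpace X] [MeasurableSpace X]
    (μ : Measure X) (x : X) : ℝ :=
  ∫ y, Real.exp (-dist x y) ∂μ

universe u

open Filter Topology
open scoped RealInnerProductSpace

section Kernels

variable {ι : Type*}

/-- The Gram matrix of a possibly infinite family of vectors is positive semidefinite. -/
theorem posSemidef_gram_real {H : Type*} [NormedAddCommGroup H] [InnerProductSpace ℝ H]
    (v : ι → H) : (Matrix.gram ℝ v).PosSemidef := by
  refine ⟨Matrix.isHermitian_gram ℝ v, fun c ↦ ?_⟩
  have h : (c.sum fun i a ↦ c.sum fun j b ↦ star a * Matrix.gram ℝ v i j * b)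
      = ⟪c.sum fun i a ↦ a • v i, c.sum fun i a ↦ a • v i⟫ := by
    simp only [Finsupp.sum, sum_inner, inner_sum, inner_smul_left, inner_smul_right,
      Matrix.gram_apply, star_trivial, conj_trivial]
    refine Finset.sum_congr rfl fun i _ ↦ ?_
    rw [Finset.mul_sum]
    exact Finset.sum_congr rfl fun j _ ↦ by rw [real_inner_comm]; ring
  rw [h]
  exact real_inner_self_nonneg

/-- An entrywise limit of positive semidefinite matrices is positive semidefinite. -/
theorem posSemidef_of_tendsto {A : ℕ → Matrix ι ι ℝ} {B : Matrix ι ι ℝ}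
    (hA : ∀ n, (A n).PosSemidef) (h : ∀ i j, Tendsto (fun n ↦ A n i j) atTop (𝓝 (B i j))) :
    B.PosSemidef := by
  refine ⟨Matrix.IsHermitian.ext fun i j ↦ ?_, fun c ↦ ?_⟩
  · refine tendsto_nhds_unique (h j i) ((h i j).congr fun n ↦ ?_)
    simpa using (hA n).1.apply j i
  · refine ge_of_tendsto' (f := fun n ↦
      c.sum fun i a ↦ c.sum fun j b ↦ star a * A n i j * b) (x := atTop) ?_ fun n ↦ (hA n).2 c
    exact tendsto_finsetSum _ fun i _ ↦ tendsto_finsetSum _ fun j _ ↦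
      ((h i j).const_mul _).mul_const _

/-- The matrix with entries `f i * f j` is positive semidefinite. -/
theorem posSemidef_of_mul (f : ι → ℝ) :
    (Matrix.of fun i j ↦ f i * f j : Matrix ι ι ℝ).PosSemidef := by
  convert posSemidef_gram_real f using 1
  ext i j
  simp [mul_comm]

/-- Entrywise powers of a positive semidefinite matrix are positive semidefinite. -/
theorem posSemidef_entrywise_pow {A : Matrix ι ι ℝ} (hA : A.PosSemidef) (n : ℕ) :
    (Matrix.of fun i j ↦ A i j ^ n : Matrix ι ι ℝ).PosSemidef := by
  induction n with
  | zero => simpa using posSemidef_of_mul (fun _ : ι ↦ (1 : ℝ))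
  | succ n ih =>
    have h : (Matrix.of fun i j ↦ A i j ^ (n + 1) : Matrix ι ι ℝ)
        = (Matrix.of fun i j ↦ A i j ^ n : Matrix ι ι ℝ).hadamard A := by
      ext i j
      simp [pow_succ]
    rw [h]
    exact ih.hadamard hA

/-- The entrywise exponential of a positive semidefinite matrix is positive semidefinite. -/
theorem posSemidef_entrywise_exp {A : Matrix ι ι ℝ} (hA : A.PosSemidef) :
    (Matrix.of fun i j ↦ Real.exp (A i j) : Matrix ι ι ℝ).PosSemidef := by
  refine posSemidef_of_tendsto
    (A := fun n ↦ ∑ k ∈ Finset.range n,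
      ((k.factorial : ℝ)⁻¹ • Matrix.of fun i j ↦ A i j ^ k : Matrix ι ι ℝ))
    (fun n ↦ Matrix.posSemidef_sum _ fun k _ ↦
      (posSemidef_entrywise_pow hA k).smul (by positivity)) fun i j ↦ ?_
  have h := (NormedSpace.expSeries_div_hasSum_exp (A i j)).tendsto_sum_nat
  rw [← Real.exp_eq_exp_ℝ] at h
  refine h.congr fun n ↦ ?_
  simp [Matrix.sum_apply, div_eq_inv_mul]

/-- The Gaussian kernel on a real inner product space is positive semidefinite. -/
theorem posSemidef_gaussian {H : Type*} [NormedAddCommGroup H] [InnerProductSpace ℝ H]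
    (v : ι → H) :
    (Matrix.of fun i j ↦ Real.exp (-‖v i - v j‖ ^ 2) : Matrix ι ι ℝ).PosSemidef := by
  have h : (Matrix.of fun i j ↦ Real.exp (-‖v i - v j‖ ^ 2) : Matrix ι ι ℝ)
      = (Matrix.of fun i j ↦ Real.exp (-‖v i‖ ^ 2) * Real.exp (-‖v j‖ ^ 2)).hadamard
        (Matrix.of fun i j ↦ Real.exp (((2 : ℝ) • Matrix.gram ℝ v) i j)) := by
    ext i j
    simp only [Matrix.of_apply, Matrix.hadamard_apply, Matrix.smul_apply, Matrix.gram_apply,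
      smul_eq_mul, ← Real.exp_add, norm_sub_sq_real]
    ring_nf
  rw [h]
  exact (posSemidef_of_mul fun i ↦ Real.exp (-‖v i‖ ^ 2)).hadamard
    (posSemidef_entrywise_exp ((posSemidef_gram_real v).smul zero_le_two))

/-- A positive semidefinite real kernel is the Gram matrix of a family in a Hilbert space. -/
theorem exists_feature_map {ι : Type u} {K : Matrix ι ι ℝ} (hK : K.PosSemidef) :
    ∃ (E : Type u) (_ : NormedAddCommGroup E) (_ : InnerProductSpace ℝ E) (_ : CompleteSpace E)
      (Φ : ι → E), ∀ i j, ⟪Φ i, Φ j⟫ = K i j := by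
  let L : Matrix ι ι (ℝ →L[ℝ] ℝ) := .of fun i j ↦ K i j • ContinuousLinearMap.id ℝ ℝ
  have hsymm : ∀ i j, K j i = K i j := fun i j ↦ by simpa using hK.1.apply i j
  have hL : L.PosSemidef := by
    have h : L.IsHermitian ∧ ∀ c : ι →₀ ℝ,
        0 ≤ RCLike.re (c.sum fun i a ↦ c.sum fun j b ↦ ⟪L j i a, b⟫) := by
      refine ⟨?_, fun c ↦ ?_⟩
      · ext i j
        simp [L, ContinuousLinearMap.star_eq_adjoint, hsymm i j, ContinuousLinearMap.adjoint_id]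
      · refine (hK.2 c).trans_eq ?_
        rw [RCLike.re_to_real]
        refine Finset.sum_congr rfl fun i _ ↦ Finset.sum_congr rfl fun j _ ↦ ?_
        simp [L, hsymm i j]
        ring
    exact (RKHS.posSemidef_tfae.out 0 2).mpr h
  have : Fact L.PosSemidef := ⟨hL⟩
  refine ⟨RKHS.OfKernel L, inferInstance, inferInstance, inferInstance,
    fun i ↦ RKHS.kerFun (RKHS.OfKernel L) i (1 : ℝ), fun i j ↦ ?_⟩
  simp [RKHS.kerFun_apply, L, hsymm i j]

end Kernels

section SimilarityForm

variable {X : Type*} [MetricSpace X] [MeasurableSpace X]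

theorem simFormP_eq_integral_Zfun (μ ν : Measure X) :
    simFormP μ ν = ∫ x, Zfun ν x ∂μ := rfl

theorem continuous_Zfun [BorelSpace X] (μ : Measure X) [IsFiniteMeasure μ] :
    Continuous (Zfun μ) := by
  refine continuous_of_dominated (bound := fun _ ↦ 1)
    (fun x ↦ (by fun_prop : Continuous fun y ↦ Real.exp (-dist x y)).aestronglyMeasurable)
    (fun x ↦ .of_forall fun y ↦ ?_) (integrable_const _) (.of_forall fun y ↦ by fun_prop)
  simp

theorem ae_mem_measSupport [CompactSpace X] (μ : Measure X) : ∀ᵐ x ∂μ, x ∈ measSupport μ := by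
  filter_upwards [μ.support_mem_ae] with x hx U hU hxU
  exact (Measure.mem_support_iff_forall x).mp hx U (hU.mem_nhds hxU)

/-- If `Zμ` is constant on the support of `μ`, then the constant is `⟨μ,μ⟩_W`. -/
theorem eq_simFormP_self_of_forall_mem_measSupport [CompactSpace X] (μ : Measure X)
    [IsProbabilityMeasure μ] {C : ℝ} (hC : ∀ x ∈ measSupport μ, Zfun μ x = C) : C = simFormP μ μ := by
  rw [simFormP_eq_integral_Zfun, integral_congr_ae ((ae_mem_measSupport μ).mono hC)]
  simp

variable [CompactSpace X] [BorelSpace X]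

/-- A continuous function on a compact metric space is integrable for finite Borel measures. -/
theorem integrable_of_continuous_compact {E : Type*} [NormedAddCommGroup E] {f : X → E}
    (hf : Continuous f) (μ : Measure X) [IsFiniteMeasure μ] : Integrable f μ := by
  simpa using hf.continuousOn.integrableOn_compact (μ := μ) isCompact_univ

theorem integrable_Zfun (μ ν : Measure X) [IsFiniteMeasure μ] [IsFiniteMeasure ν] :
    Integrable (Zfun ν) μ :=
  integrable_of_continuous_compact (continuous_Zfun ν) μ

theorem Zfun_pos (μ : Measure X) [IsProbabilityMeasure μ] (x : X) : 0 < Zfun μ x :=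
  integral_exp_pos (integrable_of_continuous_compact (by fun_prop) μ)

theorem simFormP_self_pos (μ : Measure X) [IsProbabilityMeasure μ] : 0 < simFormP μ μ := by
  rw [simFormP_eq_integral_Zfun, integral_pos_iff_support_of_nonneg
    (fun x ↦ (Zfun_pos μ x).le) (integrable_Zfun μ μ)]
  have : Function.support (Zfun μ) = Set.univ :=
    Set.eq_univ_of_forall fun x ↦ (Zfun_pos μ x).ne'
  simp [this]

/-- On a space of negative type, `⟨μ - ν, μ - ν⟩_W ≥ 0`. -/
theorem two_mul_simFormP_le {H : Type*} [NormedAddCommGroup H] [InnerProductSpace ℝ H]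
    (φ : X → H) (hφ : ∀ x y : X, ‖φ x - φ y‖ ^ 2 = dist x y)
    (μ ν : Measure X) [IsFiniteMeasure μ] [IsFiniteMeasure ν] :
    2 * simFormP μ ν ≤ simFormP μ μ + simFormP ν ν := by
  obtain ⟨E, _, _, _, Φ, hΦ⟩ := exists_feature_map (posSemidef_gaussian φ)
  simp only [Matrix.of_apply, hφ] at hΦ
  have hcont : Continuous Φ := by
    refine continuous_iff_continuousAt.mpr fun x ↦ tendsto_iff_norm_sub_tendsto_zero.mpr ?_
    have hsq : ∀ y, ‖Φ y - Φ x‖ = √(2 - 2 * Real.exp (-dist y x)) := fun y ↦ by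
      rw [← Real.sqrt_sq (norm_nonneg (Φ y - Φ x)), norm_sub_sq_real,
        ← real_inner_self_eq_norm_sq, ← real_inner_self_eq_norm_sq, hΦ, hΦ, hΦ]
      simp only [dist_self, neg_zero, Real.exp_zero]
      ring_nf
    simp only [hsq]
    have : Continuous fun y ↦ √(2 - 2 * Real.exp (-dist y x)) := by fun_prop
    simpa using this.tendsto x
  have hform : ∀ (α β : Measure X) [IsFiniteMeasure α] [IsFiniteMeasure β],
      simFormP α β = ⟪∫ x, Φ x ∂α, ∫ y, Φ y ∂β⟫ := fun α β _ _ ↦ by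
    rw [real_inner_comm, ← integral_inner (integrable_of_continuous_compact hcont α)]
    refine integral_congr_ae (.of_forall fun x ↦ ?_)
    simp only
    rw [real_inner_comm, ← integral_inner (integrable_of_continuous_compact hcont β)]
    simp only [hΦ]
  have h := real_inner_self_nonneg (x := (∫ x, Φ x ∂μ) - ∫ x, Φ x ∂ν)
  rw [real_inner_sub_sub_self, ← hform, ← hform, ← hform] at h
  linarith

/-- A diversity-maximizing measure satisfies `⟨μ,μ⟩_W ≤ Zμ` pointwise. -/
theorem simFormP_self_le_Zfun (μ : Measure X) [IsProbabilityMeasure μ]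
    (hmax : ∀ ν : Measure X, IsProbabilityMeasure ν → simFormP μ μ ≤ simFormP ν ν) (x : X) :
    simFormP μ μ ≤ Zfun μ x := by
  have key : ∀ t ∈ Set.Ioo (0 : ℝ) 1,
      (2 - t) * simFormP μ μ ≤ 2 * (1 - t) * Zfun μ x + t := by
    rintro t ⟨ht0, ht1⟩
    set ν : Measure X :=
      ENNReal.ofReal (1 - t) • μ + ENNReal.ofReal t • Measure.dirac x with hν
    have hprob : IsProbabilityMeasure ν := ⟨by
      simp [hν, ← ENNReal.ofReal_add (sub_nonneg.mpr ht1.le) ht0.le]⟩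
    have hint : ∀ f : X → ℝ, Continuous f →
        ∫ y, f y ∂ν = (1 - t) * ∫ y, f y ∂μ + t * f x := fun f hf ↦ by
      rw [hν, integral_add_measure
        ((integrable_of_continuous_compact hf μ).smul_measure ENNReal.ofReal_ne_top)
        ((integrable_of_continuous_compact hf _).smul_measure ENNReal.ofReal_ne_top),
        integral_smul_measure, integral_smul_measure, integral_dirac,
        ENNReal.toReal_ofReal (sub_nonneg.mpr ht1.le), ENNReal.toReal_ofReal ht0.le]
      rfl
    have hZ : ∀ y, Zfun ν y = (1 - t) * Zfun μ y + t * Real.exp (-dist y x) := fun y ↦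
      hint _ (by fun_prop)
    have hform : simFormP ν ν = (1 - t) ^ 2 * simFormP μ μ + 2 * t * (1 - t) * Zfun μ x + t ^ 2 := by
      have hx : ∫ y, Real.exp (-dist y x) ∂μ = Zfun μ x := by
        simp only [Zfun, dist_comm]
      rw [simFormP_eq_integral_Zfun ν ν, hint _ (continuous_Zfun ν)]
      simp only [hZ]
      rw [integral_add ((integrable_Zfun μ μ).const_mul _)
        ((integrable_of_continuous_compact (by fun_prop) μ).const_mul _),
        integral_const_mul, integral_const_mul, hx, ← simFormP_eq_integral_Zfun, dist_self,
        neg_zero, Real.exp_zero]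
      ring
    have h := hmax ν hprob
    rw [hform] at h
    refine le_of_mul_le_mul_left ?_ ht0
    linarith
  have hl : Tendsto (fun t : ℝ ↦ (2 - t) * simFormP μ μ) (𝓝[>] 0) (𝓝 ((2 - 0) * simFormP μ μ)) :=
    ((by fun_prop : Continuous fun t : ℝ ↦ (2 - t) * simFormP μ μ).tendsto 0).mono_left
      nhdsWithin_le_nhds
  have hr : Tendsto (fun t : ℝ ↦ 2 * (1 - t) * Zfun μ x + t) (𝓝[>] 0)
      (𝓝 (2 * (1 - 0) * Zfun μ x + 0)) :=
    ((by fun_prop : Continuous fun t : ℝ ↦ 2 * (1 - t) * Zfun μ x + t).tendsto 0).mono_left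
      nhdsWithin_le_nhds
  have := le_of_tendsto_of_tendsto hl hr
    (eventually_of_mem (Ioo_mem_nhdsGT one_pos) key)
  linarith

/-- If `Zμ ≥ ⟨μ,μ⟩_W` pointwise, then equality holds on the support of `μ`. -/
theorem Zfun_eq_simFormP_self_of_mem_measSupport (μ : Measure X) [IsProbabilityMeasure μ]
    (hle : ∀ x, simFormP μ μ ≤ Zfun μ x) {x : X} (hx : x ∈ measSupport μ) :
    Zfun μ x = simFormP μ μ := by
  have hae : (fun y ↦ Zfun μ y - simFormP μ μ) =ᵐ[μ] 0 := by
    rw [← integral_eq_zero_iff_of_nonneg (fun y ↦ sub_nonneg.mpr (hle y))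
      ((integrable_Zfun μ μ).sub (integrable_const _)),
      integral_sub (integrable_Zfun μ μ) (integrable_const _), ← simFormP_eq_integral_Zfun]
    simp
  by_contra hne
  refine (hx {y | Zfun μ y ≠ simFormP μ μ}
    (isOpen_ne_fun (continuous_Zfun μ) continuous_const) hne).ne' ?_
  refine measure_mono_null (fun y hy ↦ ?_) (ae_iff.mp hae)
  simpa [sub_eq_zero] using hy

end SimilarityForm

theorem stmt7 {X : Type*} [MetricSpace X] [CompactSpace X]
    [MeasurableSpace X] [BorelSpace X]
    {H : Type*} [NormedAddCommGroup H] [InnerProductSpace ℝ H] [CompleteSpace H]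
    (φ : X → H) (hφ : ∀ x y : X, ‖φ x - φ y‖ ^ 2 = dist x y)
    (μ : Measure X) (hμ : IsProbabilityMeasure μ) :
    ((∀ ν : Measure X, IsProbabilityMeasure ν → simFormP μ μ ≤ simFormP ν ν) ↔
      ∃ C : ℝ, 0 < C ∧ (∀ x ∈ measSupport μ, Zfun μ x = C) ∧ ∀ x : X, C ≤ Zfun μ x) ∧
    (∀ C : ℝ, 0 < C → (∀ x ∈ measSupport μ, Zfun μ x = C) → (∀ x : X, C ≤ Zfun μ x) →
      C = simFormP μ μ) := by
  refine ⟨⟨fun hmax ↦ ?_, ?_⟩, fun C _ hC _ ↦ eq_simFormP_self_of_forall_mem_measSupport μ hC⟩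
  · have hle := simFormP_self_le_Zfun μ hmax
    exact ⟨simFormP μ μ, simFormP_self_pos μ,
      fun x hx ↦ Zfun_eq_simFormP_self_of_mem_measSupport μ hle hx, hle⟩
  · rintro ⟨C, -, hC, hle⟩ ν hν
    have hCμ := eq_simFormP_self_of_forall_mem_measSupport μ hC
    have hCν : C ≤ simFormP ν μ := by
      simpa [simFormP_eq_integral_Zfun] using integral_mono (integrable_const C) (integrable_Zfun ν μ) hle
    linarith [two_mul_simFormP_le φ hφ ν μ]
end

section
/- Let (X,d) be a compact metric space of negative type, let μ be its diversity-maximizing measure, and let Y = supp μ. Then the measure (1/⟨μ,μ⟩_W)·μ, restricted to Y, is a nonnegative weight for the compact metric space (Y,d): for every x ∈ Y, (1/⟨μ,μ⟩_W) ∫_Y e^{−d(x,y)} dμ(y) = 1. Consequently, the maximum diversity of X equals the supremum of w(Y) over all pairs (Y, w) where Y ⊆ X is closed and w is a nonnegative weight for (Y,d), and this supremum is attained at Y = supp μ. -/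
open MeasureTheory Real

/-- The potential of a finite measure for the similarity kernel is continuous. -/
theorem continuous_integral_exp_neg_dist {X : Type*} [MetricSpace X] [CompactSpace X]
    [MeasurableSpace X] [BorelSpace X] (ν : Measure X) [IsFiniteMeasure ν] :
    Continuous fun x => ∫ y, Real.exp (-dist x y) ∂ν := by
  refine continuous_of_dominated (bound := fun _ => 1) (fun x => ?_) (fun x => ?_)
    (integrable_const _) ?_
  · exact (by fun_prop : Continuous fun y => Real.exp (-dist x y)).aestronglyMeasurable
  · refine Filter.Eventually.of_forall fun y => ?_
    rw [Real.norm_eq_abs, abs_of_pos (Real.exp_pos _)]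
    exact Real.exp_le_one_iff.2 (neg_nonpos.2 dist_nonneg)
  · exact Filter.Eventually.of_forall fun y => by fun_prop

theorem Continuous.integrable_of_compactSpace {X : Type*} [TopologicalSpace X] [CompactSpace X]
    [MeasurableSpace X] [OpensMeasurableSpace X] {f : X → ℝ} (hf : Continuous f)
    (ν : Measure X) [IsFiniteMeasure ν] : Integrable f ν :=
  hf.integrable_of_hasCompactSupport (HasCompactSupport.of_compactSpace f)

theorem measSupport_eq_support {X : Type*} [TopologicalSpace X] [MeasurableSpace X]
    (μ : Measure X) : measSupport μ = μ.support := by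
  ext x
  rw [(nhds_basis_opens x).mem_measureSupport]
  exact ⟨fun h U hU => h U hU.2 hU.1, fun h U hU hx => h U ⟨hx, hU⟩⟩

theorem simFormP_pos {X : Type*} [MetricSpace X] [CompactSpace X]
    [MeasurableSpace X] [BorelSpace X] (μ : Measure X) [IsProbabilityMeasure μ] :
    0 < simFormP μ μ := by
  have hpot (x : X) : 0 < ∫ y, Real.exp (-dist x y) ∂μ :=
    integral_exp_pos (Continuous.integrable_of_compactSpace (by fun_prop) μ)
  rw [simFormP, integral_pos_iff_support_of_nonneg (fun x => (hpot x).le)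
    ((continuous_integral_exp_neg_dist μ).integrable_of_compactSpace μ)]
  rw [Function.support_eq_univ fun x => (hpot x).ne']
  simp

/-- The similarity form on the segment from `μ` to a Dirac mass. -/
theorem simFormP_segment_dirac {X : Type*} [MetricSpace X] [CompactSpace X]
    [MeasurableSpace X] [BorelSpace X] (μ : Measure X) [IsProbabilityMeasure μ] (x : X)
    {t : ℝ} (ht0 : 0 ≤ t) (ht1 : t ≤ 1) :
    simFormP (ENNReal.ofReal (1 - t) • μ + ENNReal.ofReal t • Measure.dirac x)
        (ENNReal.ofReal (1 - t) • μ + ENNReal.ofReal t • Measure.dirac x) =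
      (1 - t) ^ 2 * simFormP μ μ + 2 * t * (1 - t) * (∫ y, Real.exp (-dist x y) ∂μ) +
        t ^ 2 := by
  have hint {f : X → ℝ} (hf : Continuous f) :
      ∫ y, f y ∂(ENNReal.ofReal (1 - t) • μ + ENNReal.ofReal t • Measure.dirac x) =
        (1 - t) * (∫ y, f y ∂μ) + t * f x := by
    rw [integral_add_measure
      ((hf.integrable_of_compactSpace μ).smul_measure ENNReal.ofReal_ne_top)
      ((hf.integrable_of_compactSpace _).smul_measure ENNReal.ofReal_ne_top),
      integral_smul_measure, integral_smul_measure, integral_dirac,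
      ENNReal.toReal_ofReal (by linarith), ENNReal.toReal_ofReal ht0, smul_eq_mul, smul_eq_mul]
  have hpot := continuous_integral_exp_neg_dist μ
  have hinner (z : X) : ∫ y, Real.exp (-dist z y)
      ∂(ENNReal.ofReal (1 - t) • μ + ENNReal.ofReal t • Measure.dirac x) =
        (1 - t) * (∫ y, Real.exp (-dist z y) ∂μ) + t * Real.exp (-dist x z) := by
    rw [hint (by fun_prop), dist_comm z x]
  rw [simFormP, integral_congr_ae (Filter.Eventually.of_forall hinner), hint (by fun_prop),
    integral_add ((hpot.integrable_of_compactSpace μ).const_mul _)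
      (Continuous.integrable_of_compactSpace (by fun_prop) μ),
    integral_const_mul, integral_const_mul, simFormP]
  simp only [dist_self, neg_zero, Real.exp_zero]
  ring

/-- First-order optimality: the potential of a minimizer is bounded below by its energy. -/
theorem simFormP_le_potential {X : Type*} [MetricSpace X] [CompactSpace X]
    [MeasurableSpace X] [BorelSpace X] (μ : Measure X) [IsProbabilityMeasure μ]
    (hmax : ∀ ν : Measure X, IsProbabilityMeasure ν → simFormP μ μ ≤ simFormP ν ν) (x : X) :
    simFormP μ μ ≤ ∫ y, Real.exp (-dist x y) ∂μ := by
  have key {t : ℝ} (ht0 : 0 ≤ t) (ht1 : t ≤ 1) : simFormP μ μ ≤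
      (1 - t) ^ 2 * simFormP μ μ + 2 * t * (1 - t) * (∫ y, Real.exp (-dist x y) ∂μ) +
        t ^ 2 := by
    rw [← simFormP_segment_dirac μ x ht0 ht1]
    refine hmax _ ⟨?_⟩
    simp only [Measure.add_apply, Measure.smul_apply, measure_univ, smul_eq_mul, mul_one]
    rw [← ENNReal.ofReal_add (by linarith) ht0, sub_add_cancel, ENNReal.ofReal_one]
  have hle_one : simFormP μ μ ≤ 1 := by simpa using key zero_le_one le_rfl
  have hnonneg : 0 ≤ ∫ y, Real.exp (-dist x y) ∂μ :=
    integral_nonneg fun y => (Real.exp_pos _).le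
  by_contra! hlt
  generalize (∫ y, Real.exp (-dist x y) ∂μ) = h at *
  generalize simFormP μ μ = m at *
  have := key (t := (m - h) / 2) (by linarith) (by linarith)
  nlinarith [mul_pos (sub_pos.2 hlt) (sub_pos.2 hlt),
    mul_nonneg (mul_pos (sub_pos.2 hlt) (sub_pos.2 hlt)).le
      (by linarith : 0 ≤ 1 - m + 2 * h)]

/-- The potential of a minimizer is constant on its support. -/
theorem potential_eq_simFormP {X : Type*} [MetricSpace X] [CompactSpace X]
    [MeasurableSpace X] [BorelSpace X] (μ : Measure X) [IsProbabilityMeasure μ]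
    (hmax : ∀ ν : Measure X, IsProbabilityMeasure ν → simFormP μ μ ≤ simFormP ν ν)
    {x : X} (hx : x ∈ measSupport μ) :
    ∫ y, Real.exp (-dist x y) ∂μ = simFormP μ μ := by
  have hcont := continuous_integral_exp_neg_dist μ
  have hint := hcont.integrable_of_compactSpace μ
  have hae : ∀ᵐ z ∂μ, (∫ y, Real.exp (-dist z y) ∂μ) - simFormP μ μ = 0 := by
    refine (integral_eq_zero_iff_of_nonneg
      (fun z => sub_nonneg.2 (simFormP_le_potential μ hmax z))
      (hint.sub (integrable_const _))).1 ?_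
    rw [integral_sub hint (integrable_const _)]
    simp [simFormP]
  by_contra hne
  refine (hx {z | (∫ y, Real.exp (-dist z y) ∂μ) ≠ simFormP μ μ}
    (isOpen_ne_fun hcont continuous_const) hne).ne' ?_
  simpa only [sub_eq_zero] using ae_iff.1 hae

/-- A nonnegative weight has mass at most the inverse of the least energy. -/
theorem weight_mass_le {X : Type*} [MetricSpace X] [MeasurableSpace X] {m : ℝ} (hm : 0 < m)
    (hmin : ∀ ν : Measure X, IsProbabilityMeasure ν → m ≤ simFormP ν ν)
    {Y : Set X} {w : Measure X} [IsFiniteMeasure w] (hY : w Yᶜ = 0)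
    (hw : ∀ x ∈ Y, ∫ y, Real.exp (-dist x y) ∂w = 1) :
    (w Set.univ).toReal ≤ 1 / m := by
  rcases eq_or_ne w 0 with rfl | hw0
  · simpa using hm.le
  have : NeZero w := ⟨hw0⟩
  have hpos : 0 < (w Set.univ).toReal :=
    ENNReal.toReal_pos (Measure.measure_univ_ne_zero.2 hw0) (measure_ne_top _ _)
  have hself : ∫ x, ∫ y, Real.exp (-dist x y) ∂w ∂w = (w Set.univ).toReal := by
    have hae : ∀ᵐ x ∂w, ∫ y, Real.exp (-dist x y) ∂w = 1 := by
      filter_upwards [compl_mem_ae_iff.2 hY] with x hx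
      exact hw x (by simpa using hx)
    rw [integral_congr_ae hae]
    simp [Measure.real]
  have henergy : simFormP ((w Set.univ)⁻¹ • w) ((w Set.univ)⁻¹ • w) =
      1 / (w Set.univ).toReal := by
    simp only [simFormP, integral_smul_measure, integral_const_mul, hself, ENNReal.toReal_inv,
      smul_eq_mul]
    field_simp
  have := hmin _ (isProbabilityMeasureSMul (μ := w))
  rw [henergy] at this
  exact (le_one_div hm hpos).1 this

theorem stmt8 {X : Type*} [MetricSpace X] [CompactSpace X]
    [MeasurableSpace X] [BorelSpace X]
    {H : Type*} [NormedAddCommGroup H] [InnerProductSpace ℝ H] [CompleteSpace H]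
    (φ : X → H) (hφ : ∀ x y : X, ‖φ x - φ y‖ ^ 2 = dist x y)
    (μ : Measure X) (hμ : IsProbabilityMeasure μ)
    (hmax : ∀ ν : Measure X, IsProbabilityMeasure ν → simFormP μ μ ≤ simFormP ν ν) :
    -- the normalized measure restricted to `Y = supp μ` is a nonnegative weight for `Y`
    (∀ x ∈ measSupport μ,
      ∫ y, Real.exp (-dist x y)
        ∂((ENNReal.ofReal (simFormP μ μ))⁻¹ • μ.restrict (measSupport μ)) = 1) ∧
    -- the maximum diversity is the greatest value `w(Y)` over closed `Y ⊆ X` carrying a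
    -- nonnegative weight `w`, ...
    IsGreatest {r : ℝ | ∃ (Y : Set X) (w : Measure X), IsClosed Y ∧ IsFiniteMeasure w ∧
        w Yᶜ = 0 ∧ (∀ x ∈ Y, ∫ y, Real.exp (-dist x y) ∂w = 1) ∧ r = (w Set.univ).toReal}
      (1 / sInf {r : ℝ | ∃ ν : Measure X, IsProbabilityMeasure ν ∧ r = simFormP ν ν}) ∧
    -- ... and this greatest value is attained at `Y = supp μ`
    (1 / sInf {r : ℝ | ∃ ν : Measure X, IsProbabilityMeasure ν ∧ r = simFormP ν ν}) =
      ((((ENNReal.ofReal (simFormP μ μ))⁻¹ • μ.restrict (measSupport μ))) Set.univ).toReal := by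
  have hpos := simFormP_pos μ
  have hleast : IsLeast {r : ℝ | ∃ ν : Measure X, IsProbabilityMeasure ν ∧ r = simFormP ν ν}
      (simFormP μ μ) := by
    refine ⟨⟨μ, hμ, rfl⟩, ?_⟩
    rintro _ ⟨ν, hν, rfl⟩
    exact hmax ν hν
  have hrestrict : μ.restrict (measSupport μ) = μ :=
    Measure.restrict_eq_self_of_ae_mem
      (measSupport_eq_support μ ▸ Measure.support_mem_ae)
  have hweight : ∀ x ∈ measSupport μ,
      ∫ y, Real.exp (-dist x y) ∂((ENNReal.ofReal (simFormP μ μ))⁻¹ • μ) = 1 := by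
    intro x hx
    rw [integral_smul_measure, potential_eq_simFormP μ hmax hx, ENNReal.toReal_inv,
      ENNReal.toReal_ofReal hpos.le, smul_eq_mul, inv_mul_cancel₀ hpos.ne']
  have hmass : 1 / simFormP μ μ =
      (((ENNReal.ofReal (simFormP μ μ))⁻¹ • μ) Set.univ).toReal := by
    simp [ENNReal.toReal_ofReal hpos.le]
  rw [hleast.csInf_eq, hrestrict]
  refine ⟨hweight, ⟨⟨measSupport μ, (ENNReal.ofReal (simFormP μ μ))⁻¹ • μ, ?_, ?_, ?_, hweight,
    hmass⟩, ?_⟩, hmass⟩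
  · rw [measSupport_eq_support]
    exact Measure.isClosed_support
  · exact μ.smul_finite (ENNReal.inv_ne_top.2 (ENNReal.ofReal_pos.2 hpos).ne')
  · simp [measSupport_eq_support]
  · rintro _ ⟨Y, w, -, hfin, hY, hw, rfl⟩
    exact weight_mass_le hpos hmax hY hw
end

section
/- Let G be a finite tree on a vertex set V with positive edge lengths ℓ and tree metric d, and let μ be a diversity-maximizing probability measure on the finite metric space (V,d). (a) If a vertex x ∈ V satisfies Σ_{e ∋ x} 1/(1 + e^{−ℓ(e)}) ≤ deg(x) − 1, then μ({x}) = 0. (b) In particular, if ℓ(e) ≤ log 2 for every edge e, then μ({x}) = 0 for every vertex x with deg(x) ≥ 3. -/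
open Finset Real

/-- If `μ` minimizes the quadratic form of a symmetric nonnegative kernel `K` with unit diagonal
among probability vectors, then the potential of `μ` is at least the minimal energy everywhere. -/
lemma energy_le_potential {V : Type*} [Fintype V] [DecidableEq V] (K : V → V → ℝ)
    (hK0 : ∀ x y, 0 ≤ K x y) (hK1 : ∀ x, K x x = 1) (hKs : ∀ x y, K x y = K y x)
    (μ : V → ℝ) (hμ0 : ∀ x, 0 ≤ μ x) (hμ1 : ∑ x, μ x = 1)
    (hμmax : ∀ ν : V → ℝ, (∀ x, 0 ≤ ν x) → ∑ x, ν x = 1 →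
      ∑ x, ∑ y, K x y * μ x * μ y ≤ ∑ x, ∑ y, K x y * ν x * ν y) (y : V) :
    ∑ x, ∑ z, K x z * μ x * μ z ≤ ∑ z, K y z * μ z := by
  set c := ∑ x, ∑ z, K x z * μ x * μ z with hc
  set k := ∑ z, K y z * μ z with hk
  have hk0 : 0 ≤ k := sum_nonneg fun z _ => mul_nonneg (hK0 y z) (hμ0 z)
  have key : ∀ s : ℝ, 0 ≤ s → s ≤ 1 → c ≤ (1 - s) ^ 2 * c + 2 * s * (1 - s) * k + s ^ 2 := by
    intro s hs0 hs1
    have h := hμmax (fun x => (1 - s) * μ x + s * (if x = y then 1 else 0)) ?_ ?_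
    · refine h.trans_eq ?_
      have e : ∀ x z, K x z * ((1 - s) * μ x + s * (if x = y then 1 else 0)) *
          ((1 - s) * μ z + s * (if z = y then 1 else 0)) =
          (1 - s) ^ 2 * (K x z * μ x * μ z)
          + s * (1 - s) * (if z = y then K x z * μ x else 0)
          + s * (1 - s) * (if x = y then K x z * μ z else 0)
          + s ^ 2 * (if x = y then (if z = y then K x z else 0) else 0) := by
        intro x z
        split_ifs <;> ring
      have e1 : ∑ x, ∑ z, (if z = y then K x z * μ x else 0) = k := by
        simp [hk, hKs y]
      have e2 : ∑ x, ∑ z, (if x = y then K x z * μ z else 0) = k := by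
        rw [sum_comm]; simp [hk]
      have e3 : ∑ x, ∑ z, (if x = y then (if z = y then K x z else 0) else 0) = 1 := by
        rw [sum_comm]; simp [hK1]
      simp only [e, sum_add_distrib, ← mul_sum, e1, e2, e3, ← hc]
      ring
    · intro x
      have := hμ0 x
      have : 0 ≤ 1 - s := by linarith
      split_ifs <;> positivity
    · simp [sum_add_distrib, ← mul_sum, hμ1]
  by_contra! hlt
  have hc1 : c ≤ 1 := by simpa using key 1 zero_le_one le_rfl
  have h := key ((c - k) / 2) (by linarith) (by linarith)
  nlinarith [mul_pos (sub_pos.2 hlt) (sub_pos.2 hlt),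
    mul_nonneg (mul_pos (sub_pos.2 hlt) (sub_pos.2 hlt)).le (by linarith : 0 ≤ 1 - c + 2 * k)]

/-- If the potential of a probability vector `μ` is at least its energy everywhere, then the two
agree on the support of `μ`. -/
lemma potential_eq_energy_of_pos {V : Type*} [Fintype V] (K : V → V → ℝ)
    (μ : V → ℝ) (hμ0 : ∀ x, 0 ≤ μ x) (hμ1 : ∑ x, μ x = 1)
    (hle : ∀ y, ∑ x, ∑ z, K x z * μ x * μ z ≤ ∑ z, K y z * μ z) (x : V) (hx : 0 < μ x) :
    ∑ z, K x z * μ z = ∑ x, ∑ z, K x z * μ x * μ z := by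
  set c := ∑ x, ∑ z, K x z * μ x * μ z with hc
  have h0 : ∑ x, μ x * (∑ z, K x z * μ z - c) = 0 := by
    simp only [mul_sub, sum_sub_distrib, ← sum_mul, hμ1, one_mul, mul_sum]
    rw [sub_eq_zero, hc]
    exact sum_congr rfl fun _ _ => sum_congr rfl fun _ _ => by ring
  rw [sum_eq_zero_iff_of_nonneg fun y _ => mul_nonneg (hμ0 y) (sub_nonneg.2 (hle y))] at h0
  have := (mul_eq_zero.1 (h0 x (mem_univ x))).resolve_left hx.ne'
  linarith

/-- Each vertex `z` of a tree lies in at most one branch at `x`, the one of the neighbour `f z`. -/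
lemma exists_branch {V : Type*} (G : SimpleGraph V) (hG : G.IsTree) (ℓ : Sym2 V → ℝ)
    (d : V → V → ℝ)
    (hd : ∀ (x y : V) (p : G.Walk x y), p.IsPath → d x y = (p.edges.map ℓ).sum) (x : V) :
    ∃ f : V → V, f x = x ∧ ∀ z y, G.Adj x y →
      (f z = y → d x z = ℓ s(x, y) + d y z) ∧ (f z ≠ y → d y z = ℓ s(x, y) + d x z) := by
  classical
  choose p hp hpu using hG.existsUnique_path x
  refine ⟨fun z => (p z).snd, ?_, fun z y hy => ⟨?_, ?_⟩⟩
  · have : p x = .nil := (hpu x .nil SimpleGraph.Walk.IsPath.nil).symm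
    simp [this]
  · intro h
    have hpz : (p z).IsPath := hp z
    rw [hd x z _ hpz]
    change (p z).snd = y at h
    revert hpz h
    cases p z with
    | nil => exact fun _ h => absurd (by simpa using h) hy.ne
    | cons hv q =>
      intro hpz h
      rw [SimpleGraph.Walk.snd_cons] at h
      subst h
      rw [hd _ z q hpz.of_cons]
      simp
  · intro h
    have hns : y ∉ (p z).support := by
      intro hmem
      apply h
      have h1 : (p z).takeUntil y hmem = SimpleGraph.Walk.cons hy .nil := by
        rw [hpu y _ ((hp z).takeUntil hmem)]
        exact (hpu y _ (by simp [hy.ne])).symm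
      have h2 := (p z).take_spec hmem
      rw [h1] at h2
      change (p z).snd = y
      rw [← h2]
      simp
    rw [hd y z (.cons hy.symm (p z)) ((SimpleGraph.Walk.cons_isPath_iff _ _).2 ⟨hp z, hns⟩),
      hd x z _ (hp z)]
    simp [Sym2.eq_swap]

lemma sum_incidenceFinset_eq_sum_neighborFinset {V : Type*} [Fintype V] [DecidableEq V]
    (G : SimpleGraph V) [DecidableRel G.Adj] (x : V) (g : Sym2 V → ℝ) :
    ∑ e ∈ G.incidenceFinset x, g e = ∑ y ∈ G.neighborFinset x, g s(x, y) := by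
  symm
  refine sum_bij (fun y _ => s(x, y)) ?_ ?_ ?_ fun _ _ => rfl
  · intro y hy
    simpa [SimpleGraph.mem_incidenceFinset, SimpleGraph.mk'_mem_incidenceSet_iff] using hy
  · intro a _ b _ h
    exact Sym2.congr_right.1 h
  · intro e he
    rw [SimpleGraph.mem_incidenceFinset] at he
    obtain ⟨y, rfl⟩ := Sym2.mem_iff_exists.1 he.2
    exact ⟨y, by simpa using he.1, rfl⟩

/-- A lower bound for the contribution `a` of one branch to the potential `c`. -/
lemma branch_lower_bound {t a c : ℝ} (ht0 : 0 < t) (ht1 : t < 1)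
    (h : c ≤ a / t + t * (c - a)) : c * (1 - 1 / (1 + t)) ≤ a := by
  have h1 : c * t ≤ a + t ^ 2 * (c - a) := by
    have := mul_le_mul_of_nonneg_right h ht0.le
    field_simp at this
    linarith
  have h2 : c * t ≤ a * (1 + t) := by
    by_contra! hlt
    nlinarith [mul_pos (sub_pos.2 hlt) (sub_pos.2 ht1)]
  have : 1 - 1 / (1 + t) = t / (1 + t) := by field_simp; ring
  rw [this, ← mul_div_assoc, div_le_iff₀ (by linarith)]
  exact h2

theorem stmt13 {V : Type*} [Fintype V] [DecidableEq V] [Nonempty V]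
    (G : SimpleGraph V) [DecidableRel G.Adj] (hG : G.IsTree)
    (ℓ : Sym2 V → ℝ) (hℓ : ∀ e ∈ G.edgeSet, 0 < ℓ e)
    (d : V → V → ℝ)
    (hd : ∀ (x y : V) (p : G.Walk x y), p.IsPath → d x y = (p.edges.map ℓ).sum)
    (μ : V → ℝ) (hμ0 : ∀ x, 0 ≤ μ x) (hμ1 : ∑ x, μ x = 1)
    (hμmax : ∀ ν : V → ℝ, (∀ x, 0 ≤ ν x) → ∑ x, ν x = 1 →
      ∑ x, ∑ y, Real.exp (-d x y) * μ x * μ y ≤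
        ∑ x, ∑ y, Real.exp (-d x y) * ν x * ν y) :
    -- (a)
    (∀ x : V, (∑ e ∈ G.incidenceFinset x, 1 / (1 + Real.exp (-ℓ e))) ≤ (G.degree x : ℝ) - 1 →
      μ x = 0) ∧
    -- (b)
    ((∀ e ∈ G.edgeSet, ℓ e ≤ Real.log 2) → ∀ x : V, 3 ≤ G.degree x → μ x = 0) := by
  have ha : ∀ x : V, (∑ e ∈ G.incidenceFinset x, 1 / (1 + Real.exp (-ℓ e))) ≤
      (G.degree x : ℝ) - 1 → μ x = 0 := by
    intro x hx
    by_contra hne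
    have hpos : 0 < μ x := lt_of_le_of_ne (hμ0 x) (Ne.symm hne)
    have hdd : ∀ v, d v v = 0 := fun v => by simpa using hd v v .nil SimpleGraph.Walk.IsPath.nil
    have hds : ∀ v w, d v w = d w v := fun v w => by
      obtain ⟨p, hp, -⟩ := hG.existsUnique_path v w
      rw [hd v w p hp, hd w v p.reverse hp.reverse]
      simp
    have hle := energy_le_potential (fun v w => Real.exp (-d v w)) (fun _ _ => (exp_pos _).le)
      (fun v => by simp [hdd]) (fun v w => by simp [hds v w]) μ hμ0 hμ1 hμmax
    have heq := potential_eq_energy_of_pos (fun v w => Real.exp (-d v w)) μ hμ0 hμ1 hle x hpos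
    set c := ∑ v, ∑ w, Real.exp (-d v w) * μ v * μ w with hc
    have hg0 : ∀ z, 0 ≤ Real.exp (-d x z) * μ z := fun z => mul_nonneg (exp_pos _).le (hμ0 z)
    have hgx : Real.exp (-d x x) * μ x = μ x := by simp [hdd]
    have hc0 : 0 < c := by
      have := single_le_sum (fun z _ => hg0 z) (mem_univ x)
      linarith
    obtain ⟨f, hfx, hf⟩ := exists_branch G hG ℓ d hd x
    have hbranch : ∀ y ∈ G.neighborFinset x, c * (1 - 1 / (1 + Real.exp (-ℓ s(x, y)))) ≤
        ∑ z, if f z = y then Real.exp (-d x z) * μ z else 0 := by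
      intro y hy
      have hxy : G.Adj x y := by simpa using hy
      refine branch_lower_bound (exp_pos _)
        (by rw [exp_lt_one_iff]; linarith [hℓ s(x, y) hxy]) ((hle y).trans_eq ?_)
      rw [← heq, ← sum_sub_distrib, sum_div, mul_sum, ← sum_add_distrib]
      refine sum_congr rfl fun z _ => ?_
      by_cases h : f z = y
      · rw [if_pos h, (hf z y hxy).1 h, div_eq_mul_inv, ← exp_neg, neg_add, exp_add]
        have : Real.exp (-ℓ s(x, y)) * Real.exp (- -ℓ s(x, y)) = 1 := by simp [← exp_add]
        linear_combination (-(Real.exp (-d y z) * μ z)) * this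
      · rw [if_neg h, (hf z y hxy).2 h, neg_add, exp_add]
        ring
    have hsum := sum_le_sum hbranch
    rw [← mul_sum, sum_sub_distrib, ← sum_incidenceFinset_eq_sum_neighborFinset G x
      (fun e => 1 / (1 + Real.exp (-ℓ e))), sum_comm] at hsum
    have hdisj : ∑ z, ∑ y ∈ G.neighborFinset x,
        (if f z = y then Real.exp (-d x z) * μ z else 0) ≤ c - μ x := by
      have : c - μ x = ∑ z, (Real.exp (-d x z) * μ z - if z = x then μ x else 0) := by
        rw [sum_sub_distrib, heq]; simp
      rw [this]
      refine sum_le_sum fun z _ => ?_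
      rw [sum_ite_eq]
      by_cases hz : z = x
      · subst hz
        simp [hfx, hdd]
      · rw [if_neg hz, sub_zero]
        split_ifs
        exacts [le_rfl, hg0 z]
    have hcard : ∑ _y ∈ G.neighborFinset x, (1 : ℝ) = G.degree x := by simp
    rw [hcard] at hsum
    nlinarith
  refine ⟨ha, fun hlog x hx => ha x ?_⟩
  have h : ∀ e ∈ G.incidenceFinset x, 1 / (1 + Real.exp (-ℓ e)) ≤ 2 / 3 := by
    intro e he
    rw [SimpleGraph.mem_incidenceFinset] at he
    have h1 : Real.exp (-Real.log 2) ≤ Real.exp (-ℓ e) := exp_le_exp.2 (by linarith [hlog e he.1])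
    rw [exp_neg, exp_log two_pos] at h1
    rw [div_le_div_iff₀ (by positivity) (by norm_num)]
    linarith
  have h2 := sum_le_card_nsmul _ _ _ h
  rw [SimpleGraph.card_incidenceFinset_eq_degree, nsmul_eq_mul] at h2
  have : (3 : ℝ) ≤ G.degree x := by exact_mod_cast hx
  linarith
end
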